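/- Fix θ ∈ (0, π) and real numbers c, d, γ₃, δ₃, l, l̄, p, p̄, M, M̄. Suppose β, γ, δ, U, V, W : (0, ∞) → ℝ satisfy, as r → ∞: γ(r) = c/r + γ₃/r³ + O(1/r⁴), δ(r) = d/r + δ₃/r³ + O(1/r⁴), β(r) = −(c² + d²)/(4r²) + O(1/r⁴), U(r) = −l/r² + p/r³ + O(1/r⁴), W(r) = −l̄/r² + p̄/r³ + O(1/r⁴), V(r) = −r + 2M + M̄/r + O(1/r²). Define G(r) as the symmetric 3×3 matrix with G₁₁ = (2 + V/r)e^{2β} + r²e^{2γ}U²cosh 2δ + r²e^{−2γ}W²cosh 2δ + 2r²UW sinh 2δ, G₁₂ = r²(e^{2γ}U cosh 2δ + W sinh 2δ), G₁₃ = r²(e^{−2γ}W cosh 2δ + U sinh 2δ) sin θ, G₂₂ = r²e^{2γ}cosh 2δ, G₂₃ = r² sinh 2δ sin θ, G₃₃ = r²e^{−2γ}cosh 2δ sin²θ. Then as r → ∞: G₁₁ = 1 + 2M/r + (−c²/2 − d²/2 + l² + l̄² + M̄)/r² + O(1/r³), G₂₂ = r² + 2rc + 2c² + 2d² + O(1/r),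 G₃₃ = (r² − 2rc + 2c² + 2d²) sin²θ + O(1/r), G₁₂ = −l + (−2cl − 2dl̄ + p)/r + O(1/r²), G₁₃ = −l̄ sin θ + (sin θ)(2cl̄ − 2dl + p̄)/r + O(1/r²), G₂₃ = 2rd sin θ + O(1/r). -/

import Mathlib

/-!
Every quantity involved, once scaled by a suitable power of `r`, has a second order expansion
`a₀ + a₁ / r + a₂ / r² + O(1 / r³)`. These expansions form an algebra (`Expansion.add`,
`Expansion.mul`), and if `a₀ = 0` they can be exponentiated, by the Taylor estimate for `exp` at `0`
(`Expansion.exp`); this covers `exp (± 2γ)`, `exp (2β)`, `cosh (2δ)` and `sinh (2δ)`. The scalings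
`r U`, `r W` and `V / r` are exactly those for which the known terms of the hypotheses end at order
`1 / r²`, so that `G₁₁`, `G₁₂ / r`, `G₁₃ / r` and `G₂₂ / r²`, `G₂₃ / r²`, `G₃₃ / r²` are polynomials
in functions with known expansions. Undoing the scaling gives the stated remainders.
-/

open Real

/-- `f(r) = O(r^{-k})` at spatial infinity: there are `C, r₀ > 0` with
`|f r| ≤ C / r^k` for all `r ≥ r₀`. -/
def BigO (f : ℝ → ℝ) (k : ℕ) : Prop :=
  ∃ C r₀ : ℝ, 0 < C ∧ 0 < r₀ ∧ ∀ r : ℝ, r₀ ≤ r → |f r| ≤ C / r ^ k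

open Filter Topology Asymptotics

/-- `f(r) = a₀ + a₁ / r + a₂ / r² + O(1 / r³)` as `r → ∞`. -/
def Expansion (f : ℝ → ℝ) (a₀ a₁ a₂ : ℝ) : Prop :=
  (fun r => f r - (a₀ + a₁ * r⁻¹ + a₂ * r⁻¹ ^ 2)) =O[atTop] fun r : ℝ => r⁻¹ ^ 3

theorem bigO_iff {f : ℝ → ℝ} {k : ℕ} :
    BigO f k ↔ f =O[atTop] fun r : ℝ => r⁻¹ ^ k := by
  constructor
  · rintro ⟨C, r₀, -, hr₀, h⟩
    refine IsBigO.of_bound C ?_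
    filter_upwards [eventually_ge_atTop r₀] with r hr
    have hp : 0 < r := hr₀.trans_le hr
    have h1 := h r hr
    rw [Real.norm_eq_abs, Real.norm_eq_abs, abs_of_pos (by positivity : 0 < r⁻¹ ^ k), inv_pow]
    rwa [div_eq_mul_inv] at h1
  · intro h
    obtain ⟨C, hC, h⟩ := h.exists_pos
    obtain ⟨r₀, h⟩ := eventually_atTop.1 h.bound
    refine ⟨C, max r₀ 1, hC, by positivity, fun r hr => ?_⟩
    have hp : 0 < r := one_pos.trans_le ((le_max_right _ _).trans hr)
    have h1 := h r ((le_max_left _ _).trans hr)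
    rw [Real.norm_eq_abs, Real.norm_eq_abs, abs_of_pos (by positivity : 0 < r⁻¹ ^ k), inv_pow] at h1
    rwa [div_eq_mul_inv]

theorem poly_isBigO_one (a₀ a₁ a₂ : ℝ) :
    (fun r : ℝ => a₀ + a₁ * r⁻¹ + a₂ * r⁻¹ ^ 2) =O[atTop] fun _ => (1 : ℝ) := by
  have h : Tendsto (fun r : ℝ => r⁻¹) atTop (𝓝 0) := tendsto_inv_atTop_zero
  exact ((tendsto_const_nhds.add (h.const_mul a₁)).add ((h.pow 2).const_mul a₂)).isBigO_one ℝ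

/-- Higher powers of `1 / r` are dominated by lower ones. -/
theorem inv_pow_isBigO {m n : ℕ} (h : m ≤ n) :
    (fun r : ℝ => r⁻¹ ^ n) =O[atTop] fun r : ℝ => r⁻¹ ^ m := by
  refine IsBigO.of_bound 1 ?_
  filter_upwards [eventually_ge_atTop 1] with r hr
  have hp : 0 < r := one_pos.trans_le hr
  rw [Real.norm_of_nonneg (by positivity), Real.norm_of_nonneg (by positivity), one_mul]
  exact pow_le_pow_of_le_one (by positivity) (inv_le_one_of_one_le₀ hr) h

namespace Expansion

variable {f g : ℝ → ℝ} {a₀ a₁ a₂ b₀ b₁ b₂ : ℝ}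

theorem isBigO_one (hf : Expansion f a₀ a₁ a₂) : f =O[atTop] fun _ => (1 : ℝ) := by
  have h3 : (fun r : ℝ => r⁻¹ ^ 3) =O[atTop] fun _ => (1 : ℝ) := by
    simpa using inv_pow_isBigO (Nat.zero_le 3)
  simpa using (IsBigO.trans hf h3).add (poly_isBigO_one a₀ a₁ a₂)

theorem add (hf : Expansion f a₀ a₁ a₂) (hg : Expansion g b₀ b₁ b₂) :
    Expansion (fun r => f r + g r) (a₀ + b₀) (a₁ + b₁) (a₂ + b₂) :=
  (IsBigO.add hf hg).congr_left fun r => by ring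

theorem const_mul (k : ℝ) (hf : Expansion f a₀ a₁ a₂) :
    Expansion (fun r => k * f r) (k * a₀) (k * a₁) (k * a₂) :=
  (IsBigO.const_mul_left hf k).congr_left fun r => by ring

theorem const (k : ℝ) : Expansion (fun _ => k) k 0 0 :=
  (isBigO_zero _ _).congr_left fun r => by ring

theorem mul (hf : Expansion f a₀ a₁ a₂) (hg : Expansion g b₀ b₁ b₂) :
    Expansion (fun r => f r * g r) (a₀ * b₀) (a₀ * b₁ + a₁ * b₀)
      (a₀ * b₂ + a₁ * b₁ + a₂ * b₀) := by
  have h1 := IsBigO.mul hf hg.isBigO_one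
  have h2 := (poly_isBigO_one a₀ a₁ a₂).mul hg
  have h3 := (poly_isBigO_one (a₁ * b₂ + a₂ * b₁) (a₂ * b₂) 0).mul
    (isBigO_refl (fun r : ℝ => r⁻¹ ^ 3) atTop)
  simp only [mul_one, one_mul] at h1 h2 h3
  exact ((h1.add h2).add h3).congr_left fun r => by ring

/-- A function whose expansion has no constant term is `O(1 / r)`. -/
theorem isBigO_inv (hf : Expansion f 0 a₁ a₂) : f =O[atTop] fun r : ℝ => r⁻¹ := by
  have h1 : (fun r : ℝ => r⁻¹ ^ 3) =O[atTop] fun r : ℝ => r⁻¹ := by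
    simpa using inv_pow_isBigO (show 1 ≤ 3 by norm_num)
  have h2 := (poly_isBigO_one a₁ a₂ 0).mul (isBigO_refl (fun r : ℝ => r⁻¹) atTop)
  simp only [one_mul] at h2
  exact ((IsBigO.trans hf h1).add h2).congr_left fun r => by ring

theorem exp (hf : Expansion f 0 a₁ a₂) :
    Expansion (fun r => Real.exp (f r)) 1 a₁ (a₂ + a₁ ^ 2 / 2) := by
  have h0 : Tendsto f atTop (𝓝 0) := hf.isBigO_inv.trans_tendsto tendsto_inv_atTop_zero
  have h1 := ((Real.exp_sub_sum_range_isBigO_pow 3).comp_tendsto h0).trans (hf.isBigO_inv.pow 3)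
  have h2 : Expansion (fun r => 1 + f r + 1 / 2 * (f r * f r)) _ _ _ :=
    ((const 1).add hf).add ((hf.mul hf).const_mul (1 / 2))
  refine (IsBigO.add h1 h2).congr_left fun r => ?_
  simp only [Function.comp, Finset.sum_range_succ, Finset.sum_range_zero, Nat.factorial]
  push_cast
  ring

theorem exp_neg (hf : Expansion f 0 a₁ a₂) :
    Expansion (fun r => Real.exp (-f r)) 1 (-a₁) (-a₂ + a₁ ^ 2 / 2) := by
  have h : Expansion (fun r => -f r) 0 (-a₁) (-a₂) := by simpa using hf.const_mul (-1)
  simpa using h.exp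

theorem cosh (hf : Expansion f 0 a₁ a₂) :
    Expansion (fun r => Real.cosh (f r)) 1 0 (a₁ ^ 2 / 2) := by
  refine IsBigO.congr_left ((hf.exp.add hf.exp_neg).const_mul (1 / 2)) fun r => ?_
  beta_reduce
  rw [Real.cosh_eq]
  ring

theorem sinh (hf : Expansion f 0 a₁ a₂) :
    Expansion (fun r => Real.sinh (f r)) 0 a₁ a₂ := by
  refine IsBigO.congr_left ((hf.exp.add (hf.exp_neg.const_mul (-1))).const_mul (1 / 2)) fun r => ?_
  beta_reduce
  rw [Real.sinh_eq]
  ring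

/-- Multiplying an expansion by `r ^ m` lowers the order of the remainder by `m`. -/
theorem bigO_of_eq {F : ℝ → ℝ} (hf : Expansion f a₀ a₁ a₂) (m k : ℕ) (hk : m + k = 3)
    (h : ∀ r : ℝ, r ≠ 0 → F r = r ^ m * (f r - (a₀ + a₁ * r⁻¹ + a₂ * r⁻¹ ^ 2))) : BigO F k := by
  rw [bigO_iff]
  refine ((isBigO_refl (fun r : ℝ => r ^ m) atTop).mul hf).congr' ?_ ?_
  · filter_upwards [eventually_ne_atTop 0] with r hr using (h r hr).symm
  · filter_upwards [eventually_ne_atTop 0] with r hr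
    rw [← hk, pow_add, ← mul_assoc, ← mul_pow, mul_inv_cancel₀ hr, one_pow, one_mul]

/-- A remainder `F = O(1 / r ^ k)`, rescaled by a power `s` of `r`, is admissible in an
expansion as soon as `s F = O(1 / r³)`; a term `q / r³` may also be discarded. -/
theorem of_bigO {F e : ℝ → ℝ} {k n : ℕ} (s : ℝ → ℝ) (q : ℝ) (hF : BigO F k)
    (hs : ∀ r : ℝ, r ≠ 0 → s r * r⁻¹ ^ k = r⁻¹ ^ n) (hn : 3 ≤ n)
    (h : ∀ r : ℝ, r ≠ 0 →
      e r - (a₀ + a₁ * r⁻¹ + a₂ * r⁻¹ ^ 2) = s r * F r + q * r⁻¹ ^ 3) :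
    Expansion e a₀ a₁ a₂ := by
  have h1 := (isBigO_refl s atTop).mul (bigO_iff.1 hF)
  have h2 : (fun r => s r * F r) =O[atTop] fun r : ℝ => r⁻¹ ^ 3 := by
    refine IsBigO.trans (h1.congr' EventuallyEq.rfl ?_) (inv_pow_isBigO hn)
    filter_upwards [eventually_ne_atTop 0] with r hr using hs r hr
  refine (h2.add ((isBigO_refl _ atTop).const_mul_left q)).congr' ?_ EventuallyEq.rfl
  filter_upwards [eventually_ne_atTop 0] with r hr using (h r hr).symm

end Expansion

/-- Asymptotic expansion at spatial infinity of the induced metric `g_{ij}` on a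
slice `{t = t₀}` of a Bondi radiating spacetime. -/
theorem induced_metric_expansion
    (θ c d γ₃ δ₃ l lb p pb M Mb : ℝ) (hθ : θ ∈ Set.Ioo 0 π)
    (β γ δ U V W : ℝ → ℝ)
    (hγ : BigO (fun r => γ r - (c / r + γ₃ / r ^ 3)) 4)
    (hδ : BigO (fun r => δ r - (d / r + δ₃ / r ^ 3)) 4)
    (hβ : BigO (fun r => β r - (-((c ^ 2 + d ^ 2) / (4 * r ^ 2)))) 4)
    (hU : BigO (fun r => U r - (-(l / r ^ 2) + p / r ^ 3)) 4)
    (hW : BigO (fun r => W r - (-(lb / r ^ 2) + pb / r ^ 3)) 4)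
    (hV : BigO (fun r => V r - (-r + 2 * M + Mb / r)) 2) :
    -- G₁₁
    BigO (fun r => ((2 + V r / r) * exp (2 * β r)
        + r ^ 2 * exp (2 * γ r) * (U r) ^ 2 * cosh (2 * δ r)
        + r ^ 2 * exp (-(2 * γ r)) * (W r) ^ 2 * cosh (2 * δ r)
        + 2 * r ^ 2 * U r * W r * sinh (2 * δ r))
      - (1 + 2 * M / r + (-(c ^ 2 / 2) - d ^ 2 / 2 + l ^ 2 + lb ^ 2 + Mb) / r ^ 2)) 3 ∧
    -- G₂₂
    BigO (fun r => r ^ 2 * exp (2 * γ r) * cosh (2 * δ r)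
      - (r ^ 2 + 2 * r * c + 2 * c ^ 2 + 2 * d ^ 2)) 1 ∧
    -- G₃₃
    BigO (fun r => r ^ 2 * exp (-(2 * γ r)) * cosh (2 * δ r) * sin θ ^ 2
      - ((r ^ 2 - 2 * r * c + 2 * c ^ 2 + 2 * d ^ 2) * sin θ ^ 2)) 1 ∧
    -- G₁₂
    BigO (fun r => r ^ 2 * (exp (2 * γ r) * U r * cosh (2 * δ r) + W r * sinh (2 * δ r))
      - (-l + (-(2 * c * l) - 2 * d * lb + p) / r)) 2 ∧
    -- G₁₃
    BigO (fun r => r ^ 2 * (exp (-(2 * γ r)) * W r * cosh (2 * δ r) + U r * sinh (2 * δ r)) * sin θ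
      - (-(lb * sin θ) + sin θ * (2 * c * lb - 2 * d * l + pb) / r)) 2 ∧
    -- G₂₃
    BigO (fun r => r ^ 2 * sinh (2 * δ r) * sin θ
      - 2 * r * d * sin θ) 1 := by
  have eγ : Expansion (fun r => 2 * γ r) 0 (2 * c) 0 := by
    have h : Expansion γ 0 c 0 :=
      .of_bigO (n := 4) (fun _ => 1) γ₃ hγ (fun r _ => one_mul _) (by norm_num)
        fun r hr => by field_simp; ring
    simpa using h.const_mul 2
  have eδ : Expansion (fun r => 2 * δ r) 0 (2 * d) 0 := by
    have h : Expansion δ 0 d 0 :=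
      .of_bigO (n := 4) (fun _ => 1) δ₃ hδ (fun r _ => one_mul _) (by norm_num)
        fun r hr => by field_simp; ring
    simpa using h.const_mul 2
  have eβ : Expansion (fun r => 2 * β r) 0 0 (2 * -((c ^ 2 + d ^ 2) / 4)) := by
    have h : Expansion β 0 0 (-((c ^ 2 + d ^ 2) / 4)) :=
      .of_bigO (n := 4) (fun _ => 1) 0 hβ (fun r _ => one_mul _) (by norm_num)
        fun r hr => by field_simp; ring
    simpa using h.const_mul 2
  have eU : Expansion (fun r => r * U r) 0 (-l) p :=
    .of_bigO (n := 3) (fun r => r) 0 hU (fun r hr => by field_simp) le_rfl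
      fun r hr => by field_simp; ring
  have eW : Expansion (fun r => r * W r) 0 (-lb) pb :=
    .of_bigO (n := 3) (fun r => r) 0 hW (fun r hr => by field_simp) le_rfl
      fun r hr => by field_simp; ring
  have eV : Expansion (fun r => V r / r) (-1) (2 * M) Mb :=
    .of_bigO (n := 3) (fun r => r⁻¹) 0 hV (fun r hr => by ring) le_rfl
      fun r hr => by field_simp; ring
  have eCh := eδ.cosh
  have eSh := eδ.sinh
  have eP := eγ.exp
  have eN := eγ.exp_neg
  refine ⟨?_, ?_, ?_, ?_, ?_, ?_⟩
  · exact ((((((Expansion.const 2).add eV).mul eβ.exp).add ((eP.mul (eU.mul eU)).mul eCh)).add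
      ((eN.mul (eW.mul eW)).mul eCh)).add (((eU.mul eW).mul eSh).const_mul 2)).bigO_of_eq 0 3 rfl
      fun r hr => by ring
  · exact (eP.mul eCh).bigO_of_eq 2 1 rfl fun r hr => by field_simp; ring
  · exact ((eN.mul eCh).const_mul (sin θ ^ 2)).bigO_of_eq 2 1 rfl fun r hr => by field_simp; ring
  · exact (((eP.mul eU).mul eCh).add (eW.mul eSh)).bigO_of_eq 1 2 rfl
      fun r hr => by field_simp; ring
  · exact ((((eN.mul eW).mul eCh).add (eU.mul eSh)).const_mul (sin θ)).bigO_of_eq 1 2 rfl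
      fun r hr => by field_simp; ring
  · exact (eSh.const_mul (sin θ)).bigO_of_eq 2 1 rfl fun r hr => by field_simp; ring
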